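/- arXiv:2112.06918 — 3 statements merged into one kernel-verified Lean document; each statement's English description precedes it below -/
import Mathlib

section
/- Let λ ≥ 0 and C ≥ 0 be real constants, and let q : ℕ → ℝ be a nonnegative sequence (the per-solicitation regret bounds) satisfying ∑_{l=1}^{n} q_l ≤ C·√n for every natural number n ≥ 1. Let T be a natural number with T ≥ 1, let B = ⌊T^{1/3}⌋ (the natural-number floor of the real cube root of T), and let L = ⌈T / B⌉ (the natural-number ceiling of the real quotient). Then B·∑_{l=1}^{L} q_l + λ·L ≤ (2C + 3λ)·T^{2/3}. (This is the m-regret bound O(T^{2/3}) of NeuralUCB with the feedback solicitation scheme FSS, Theorem 1 of the paper, stated at the level of the sequences used in its proof.) -/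
/-!
With `x = T^(1/3) ≥ 1`, the floor satisfies `1 ≤ B ≤ x < B + 1 ≤ 2 B`, and `L < T / B + 1`.
Hence `L ≤ 2 x² + 1 ≤ 3 x²`, which bounds the solicitation cost, and
`B² L ≤ B T + B² ≤ x⁴ + x² ≤ (2 x²)²`, so `B √L ≤ 2 x²`, which together with the
hypothesis at `n = L` bounds the learning regret.
-/

/-- m-regret bound `O(T^(2/3))` of NeuralUCB with the feedback solicitation
scheme FSS (Theorem 1), at the level of the sequences used in its proof. -/
theorem fss_m_regret_bound
    (lam C : ℝ) (hlam : 0 ≤ lam) (hC : 0 ≤ C)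
    (q : ℕ → ℝ) (hq : ∀ l, 0 ≤ q l)
    (hsum : ∀ n : ℕ, 1 ≤ n → ∑ l ∈ Finset.Icc 1 n, q l ≤ C * Real.sqrt n)
    (T : ℕ) (hT : 1 ≤ T)
    (B : ℕ) (hB : B = ⌊(T : ℝ) ^ ((1 : ℝ) / 3)⌋₊)
    (L : ℕ) (hL : L = ⌈(T : ℝ) / (B : ℝ)⌉₊) :
    (B : ℝ) * ∑ l ∈ Finset.Icc 1 L, q l + lam * (L : ℝ)
      ≤ (2 * C + 3 * lam) * (T : ℝ) ^ ((2 : ℝ) / 3) := by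
  obtain ⟨x, hx⟩ : ∃ x : ℝ, x = (T : ℝ) ^ ((1 : ℝ) / 3) := ⟨_, rfl⟩
  have hT1 : (1 : ℝ) ≤ T := by exact_mod_cast hT
  have hT0 : (0 : ℝ) ≤ T := by linarith
  have hx1 : 1 ≤ x := hx ▸ Real.one_le_rpow hT1 (by norm_num)
  have hx0 : 0 ≤ x := by linarith
  have hx3 : x ^ 3 = T := by
    rw [hx, ← Real.rpow_natCast, ← Real.rpow_mul hT0]; norm_num
  have hx2 : (T : ℝ) ^ ((2 : ℝ) / 3) = x ^ 2 := by
    rw [hx, ← Real.rpow_natCast, ← Real.rpow_mul hT0]; norm_num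
  rw [hx2]
  rw [← hx] at hB
  have hBx : (B : ℝ) ≤ x := hB ▸ Nat.floor_le hx0
  have hxB : x < B + 1 := hB ▸ Nat.lt_floor_add_one x
  have hB1 : (1 : ℝ) ≤ B := by
    have : 1 ≤ B := hB ▸ Nat.le_floor (by simpa using hx1)
    exact_mod_cast this
  have hB0 : (0 : ℝ) < B := by linarith
  have hL1 : 1 ≤ L := by
    rw [hL]
    exact Nat.ceil_pos.2 (by positivity)
  have hLlt : (L : ℝ) < T / B + 1 := hL ▸ Nat.ceil_lt_add_one (by positivity)
  have hL3 : (L : ℝ) ≤ 3 * x ^ 2 := by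
    -- `x < B + 1 ≤ 2 * B`, so rounding the block length down at most doubles the block count.
    have h : (T : ℝ) / B ≤ 2 * x ^ 2 := by
      rw [div_le_iff₀ hB0, ← hx3]
      nlinarith [mul_nonneg (sq_nonneg x) (show 0 ≤ 2 * (B : ℝ) - x by linarith)]
    nlinarith
  have hBL : (B : ℝ) * Real.sqrt L ≤ 2 * x ^ 2 := by
    -- Squared: `B² L ≤ B (T + B) ≤ x (x³ + x) ≤ (2 x²)²`.
    have h1 : (B : ℝ) * L ≤ x ^ 3 + x := by
      have h := mul_le_mul_of_nonneg_left hLlt.le hB0.le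
      rw [mul_add, mul_div_cancel₀ (T : ℝ) hB0.ne', ← hx3] at h
      linarith
    have h2 : (B : ℝ) * (B * L) ≤ x * (x ^ 3 + x) :=
      mul_le_mul hBx h1 (by positivity) hx0
    have h3 : x ^ 2 ≤ x ^ 4 := pow_le_pow_right₀ hx1 (by norm_num)
    refine (sq_le_sq₀ (by positivity) (by positivity)).1 ?_
    rw [mul_pow, Real.sq_sqrt (Nat.cast_nonneg L)]
    nlinarith
  have hS : (B : ℝ) * ∑ l ∈ Finset.Icc 1 L, q l ≤ C * (2 * x ^ 2) :=
    calc (B : ℝ) * ∑ l ∈ Finset.Icc 1 L, q l ≤ B * (C * Real.sqrt L) := by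
          gcongr; exact hsum L hL1
      _ = C * (B * Real.sqrt L) := by ring
      _ ≤ C * (2 * x ^ 2) := by gcongr
  linarith [mul_le_mul_of_nonneg_left hL3 hlam]
end

section
/- Let α ∈ (0,1), set c = 1/(1−α), and let λ ≥ 0 and C ≥ 0 be real constants. Let q : ℕ → ℝ be a nonnegative sequence satisfying ∑_{l=1}^{n} q_l ≤ C·√n for every natural number n ≥ 1. Let T be a natural number with T ≥ 1 and let L = ⌊T^{1−α}⌋ (natural-number floor of the real power). Then there exists a constant K depending only on α, C, and λ (one may take K = C·(c·2^{c−1} + 1) + λ) such that ∑_{l=1}^{L} (⌈(l+1)^c⌉ − ⌈l^c⌉)·q_l + λ·L ≤ K·T^{z}, where z = max{(α+1)/2, 1−α}. (This is the m-regret bound of NeuralUCB with FSS-UT, Theorem 2 of the paper, stated at the level of the sequences used in its proof.) -/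
/-!
By Bernoulli's inequality `(l+1)^c - l^c ≤ c (l+1)^(c-1)`, and `l + 1 ≤ 2 l`, so each block has
length at most `(c 2^(c-1) + 1) l^(c-1)`, the `+ 1` absorbing the rounding (`block_length_le`).
Bounding `l ≤ L` and using the hypothesis on the partial sums of `q`, the learning regret is at most
`C (c 2^(c-1) + 1) L^(c-1) √L`. Since `L ≤ T^(1-α)` and `(1-α)(c - 1/2) = (α+1)/2`, this is at most
`C (c 2^(c-1) + 1) T^((α+1)/2)`, while the solicitation cost is at most `lam * T^(1-α)`.
-/

/-- The mean-value bound for `x ↦ x^c` on `[x - 1, x]`, obtained from Bernoulli's inequality. -/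
lemma rpow_sub_rpow_le {c x : ℝ} (hc : 1 ≤ c) (hx : 1 ≤ x) :
    x ^ c - (x - 1) ^ c ≤ c * x ^ (c - 1) := by
  have hx0 : 0 < x := by linarith
  have hinv : x⁻¹ ≤ 1 := inv_le_one_of_one_le₀ hx
  have hb := one_add_mul_self_le_rpow_one_add (s := -x⁻¹) (by linarith) hc
  have hfac : (x - 1) ^ c = x ^ c * (1 + -x⁻¹) ^ c := by
    rw [← Real.mul_rpow hx0.le (by linarith)]
    congr 1
    field_simp
    ring
  have hpow : x ^ (c - 1) = x ^ c * x⁻¹ := by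
    rw [Real.rpow_sub_one hx0.ne', div_eq_mul_inv]
  have hmul := mul_le_mul_of_nonneg_left hb (Real.rpow_nonneg hx0.le c)
  rw [hfac, hpow]
  linarith

lemma block_length_le {c : ℝ} (hc : 1 ≤ c) {l : ℕ} (hl : 1 ≤ l) :
    (⌈((l : ℝ) + 1) ^ c⌉₊ : ℝ) - (⌈(l : ℝ) ^ c⌉₊ : ℝ)
      ≤ (c * (2 : ℝ) ^ (c - 1) + 1) * (l : ℝ) ^ (c - 1) := by
  have hl' : (1 : ℝ) ≤ l := by exact_mod_cast hl
  have hup := Nat.ceil_lt_add_one (a := ((l : ℝ) + 1) ^ c) (by positivity)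
  have hlo := Nat.le_ceil ((l : ℝ) ^ c)
  have hmv := rpow_sub_rpow_le hc (x := (l : ℝ) + 1) (by linarith)
  rw [add_sub_cancel_right] at hmv
  have hdbl : ((l : ℝ) + 1) ^ (c - 1) ≤ (2 : ℝ) ^ (c - 1) * (l : ℝ) ^ (c - 1) := by
    rw [← Real.mul_rpow (by norm_num) (by linarith)]
    exact Real.rpow_le_rpow (by linarith) (by linarith) (by linarith)
  have hone : 1 ≤ (l : ℝ) ^ (c - 1) := Real.one_le_rpow hl' (by linarith)
  have hmul := mul_le_mul_of_nonneg_left hdbl (by linarith : 0 ≤ c)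
  linarith

/-- m-regret bound of NeuralUCB with FSS-UT (Theorem 2), at the level of the
sequences used in its proof: with `c = 1/(1-α)` and `L = ⌊T^(1-α)⌋`, the
learning regret plus solicitation cost is at most `K · T^z` where
`z = max ((α+1)/2) (1-α)` and `K = C·(c·2^(c-1) + 1) + λ`. -/
theorem fss_ut_m_regret_bound
    (α : ℝ) (hα : α ∈ Set.Ioo (0 : ℝ) 1)
    (c : ℝ) (hc : c = 1 / (1 - α))
    (lam C : ℝ) (hlam : 0 ≤ lam) (hC : 0 ≤ C)
    (q : ℕ → ℝ) (hq : ∀ l, 0 ≤ q l)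
    (hsum : ∀ n : ℕ, 1 ≤ n → ∑ l ∈ Finset.Icc 1 n, q l ≤ C * Real.sqrt n)
    (T : ℕ) (hT : 1 ≤ T)
    (L : ℕ) (hL : L = ⌊(T : ℝ) ^ (1 - α)⌋₊)
    (z : ℝ) (hz : z = max ((α + 1) / 2) (1 - α)) :
    ∃ K : ℝ, K = C * (c * (2 : ℝ) ^ (c - 1) + 1) + lam ∧
      ∑ l ∈ Finset.Icc 1 L,
          ((⌈((l : ℝ) + 1) ^ c⌉₊ : ℝ) - (⌈(l : ℝ) ^ c⌉₊ : ℝ)) * q l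
        + lam * (L : ℝ) ≤ K * (T : ℝ) ^ z := by
  obtain ⟨hα0, hα1⟩ := hα
  refine ⟨_, rfl, ?_⟩
  have hβ : 0 < 1 - α := by linarith
  have hc1 : 1 ≤ c := by
    rw [hc, le_div_iff₀ hβ]
    linarith
  have hT' : (1 : ℝ) ≤ T := by exact_mod_cast hT
  have hL1 : 1 ≤ L := by
    rw [hL, Nat.one_le_floor_iff]
    exact Real.one_le_rpow hT' hβ.le
  have hL1' : (1 : ℝ) ≤ L := by exact_mod_cast hL1
  have hLT : (L : ℝ) ≤ (T : ℝ) ^ (1 - α) := by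
    rw [hL]
    exact Nat.floor_le (by positivity)
  set A : ℝ := c * (2 : ℝ) ^ (c - 1) + 1 with hA
  have hA0 : 0 ≤ A := by positivity
  have hlearn : ∑ l ∈ Finset.Icc 1 L,
      ((⌈((l : ℝ) + 1) ^ c⌉₊ : ℝ) - (⌈(l : ℝ) ^ c⌉₊ : ℝ)) * q l
      ≤ A * (L : ℝ) ^ (c - 1) * (C * Real.sqrt L) := by
    calc _ ≤ ∑ l ∈ Finset.Icc 1 L, A * (L : ℝ) ^ (c - 1) * q l := by
          refine Finset.sum_le_sum fun l hl => mul_le_mul_of_nonneg_right ?_ (hq l)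
          obtain ⟨h1, h2⟩ := Finset.mem_Icc.mp hl
          refine (block_length_le hc1 h1).trans (mul_le_mul_of_nonneg_left ?_ hA0)
          exact Real.rpow_le_rpow (by positivity) (by exact_mod_cast h2) (by linarith)
      _ ≤ _ := by
          rw [← Finset.mul_sum]
          exact mul_le_mul_of_nonneg_left (hsum L hL1) (by positivity)
  have hexp : (L : ℝ) ^ (c - 1) * Real.sqrt L ≤ (T : ℝ) ^ ((α + 1) / 2) := by
    rw [Real.sqrt_eq_rpow, ← Real.rpow_add (by linarith)]
    refine (Real.rpow_le_rpow (by linarith) hLT (by linarith)).trans_eq ?_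
    rw [← Real.rpow_mul (by linarith)]
    congr 1
    rw [hc]
    field_simp
    ring
  have hz1 : (T : ℝ) ^ ((α + 1) / 2) ≤ (T : ℝ) ^ z :=
    Real.rpow_le_rpow_of_exponent_le hT' (hz ▸ le_max_left _ _)
  have hz2 : (T : ℝ) ^ (1 - α) ≤ (T : ℝ) ^ z :=
    Real.rpow_le_rpow_of_exponent_le hT' (hz ▸ le_max_right _ _)
  have h1 := mul_le_mul_of_nonneg_left (hexp.trans hz1) (mul_nonneg hC hA0)
  have h2 := mul_le_mul_of_nonneg_left (hLT.trans hz2) hlam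
  linarith
end

section
/- Let α ∈ (0,1) be a real number and T ≥ 1 a natural number. Then the number of positive integers l such that ⌈l^{1/(1−α)}⌉ ≤ T (natural-number ceiling of the real power) is exactly ⌊T^{1−α}⌋ (natural-number floor of the real power). That is, under FSS-UT the number of QoE solicitations executed up to session T equals ⌊T^{1−α}⌋. -/
/-- Under FSS-UT with parameter `α ∈ (0,1)`, where the `l`-th solicitation
happens at session `⌈l^(1/(1-α))⌉`, the number of solicitations executed up to
session `T` is exactly `⌊T^(1-α)⌋`. -/
theorem fss_ut_solicitation_count
    (α : ℝ) (hα : α ∈ Set.Ioo (0 : ℝ) 1)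
    (T : ℕ) (hT : 1 ≤ T) :
    Nat.card {l : ℕ | 1 ≤ l ∧ ⌈(l : ℝ) ^ (1 / (1 - α))⌉₊ ≤ T}
      = ⌊(T : ℝ) ^ (1 - α)⌋₊ := by
  have hpos : 0 < 1 - α := sub_pos.mpr hα.2
  -- Raising to the power `1 - α` is monotone, so the ceiling condition on `l`
  -- says exactly `l ≤ T ^ (1 - α)`.
  have hset : {l : ℕ | 1 ≤ l ∧ ⌈(l : ℝ) ^ (1 / (1 - α))⌉₊ ≤ T}
      = ↑(Finset.Icc 1 ⌊(T : ℝ) ^ (1 - α)⌋₊) := by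
    ext l
    rw [Set.mem_setOf_eq, Finset.mem_coe, Finset.mem_Icc, Nat.ceil_le,
      Nat.le_floor_iff (by positivity), one_div,
      Real.rpow_inv_le_iff_of_pos (by positivity) (by positivity) hpos]
  rw [hset]
  simp
end
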